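/- Let α ∈ [0,1/2) be a real number and let F be a graph such that there is a constant c₀ > 0 with ex(b,F) ≤ c₀·b^{1+α} for every positive integer b. Then there exist constants C > 0 and N such that for every integer n > N, f_{F,K_3}(n) ≤ C · n^{1/(2-α)} · (log n)^{3/(2-α)}. -/

import Mathlib

/-!
The extremal graph is a random induced blow-up of a pseudorandom triangle-free graph. Let `p` be a
prime and let `Γ` be the Cayley graph on `𝔽_p³ × 𝔽_2^p` in which two vertices are adjacent when
their points differ by a nonzero multiple of some `(1, t, t²)` and their bits in direction `t`
differ. Any three distinct vectors on the moment curve are independent, so the three sides of a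
triangle would be parallel, which the bits forbid: `Γ` is triangle-free
(`pbGraph_triangle_free`). Its nontrivial eigenvalues are smaller than the degree by a factor of
about `p` (`norm_sum_connSet_le`), so by expander mixing any two vertex weightings of density at
least `4 / p` span a positive proportion of the expected number of edges (`pbGraph_mixing`).

Choose `n` vertices of `Γ` uniformly and independently and let `G` be the graph they induce on the
indices; it is triangle-free. An `m`-set of indices with no copy of `F` spans at most `ex(m, F)`
edges, so it is enough to bound the probability that `m` random vertices span that few. Weight a
sequence by `r` to the number of its edges. Placing one vertex at a time and multiplying the
weights of its neighbours by `r`, either the placed vertex is one of the exceptional vertices,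
which carry weight of density at most `4 / p`, or the total weight drops by a factor
`1 - (1 - r) / (16 p)`. A power of the total weight is a potential that balances the two cases, so
the mean weight of a sequence is at most `(8 / p) ^ m * exp (O (p * log p ^ 2 / (1 - r)))`
(`sum_seqWeight_le`). With `1 - r` of order `m ^ (-a)`, so that `ex(m, F) = O(m ^ (1 + a))` edges
cost only `exp (-m)`, a union bound over all `m`-sets succeeds once `m` is at least a constant
times both `n / p` and `(p * log p ^ 2) * m ^ a` (`minFIndep_le_of_weight`,
`minFIndep_le_of_params`).
With `M = n ^ (1 / (2 - a)) * log n ^ (3 / (2 - a))`, the choices `m ≈ 200 * M` and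
`n / M ≤ p ≤ 2 * n / M` satisfy both conditions for large `n`.
-/

/-- `G` contains a copy of `F` as a (not necessarily induced) subgraph, i.e. there is an
injective graph homomorphism from `F` to `G`. -/
def ContainsCopy {α β : Type*} (F : SimpleGraph α) (G : SimpleGraph β) : Prop :=
  ∃ f : α → β, Function.Injective f ∧ ∀ ⦃a b : α⦄, F.Adj a b → G.Adj (f a) (f b)

/-- The `F`-independence number of a finite graph `G`: the maximum size of a set `S` of
vertices such that the induced subgraph `G[S]` contains no copy of `F`. -/
noncomputable def fIndepNum {α β : Type*} [Fintype β] (F : SimpleGraph α) (G : SimpleGraph β) :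
    ℕ :=
  sSup {k | ∃ S : Finset β, S.card = k ∧ ¬ ContainsCopy F (G.induce (S : Set β))}

/-- `f_{F,H}(n)`: the minimum of the `F`-independence number over all `H`-free graphs on
`n` vertices. -/
noncomputable def minFIndep {α γ : Type*} (F : SimpleGraph α) (H : SimpleGraph γ) (n : ℕ) : ℕ :=
  sInf {k | ∃ G : SimpleGraph (Fin n), ¬ ContainsCopy H G ∧ fIndepNum F G = k}

/-- The Turán number `ex(n, F)`: the maximum number of edges of an `F`-free graph on `n`
vertices. -/
noncomputable def turanNum (n : ℕ) {α : Type*} (F : SimpleGraph α) : ℕ :=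
  sSup {k | ∃ G : SimpleGraph (Fin n), ¬ ContainsCopy F G ∧ k = Nat.card G.edgeSet}

/-! ### Expander mixing in finite abelian groups -/

section Mixing

variable {G : Type*} [AddCommGroup G] [Fintype G]

/-- The (unnormalised) Fourier coefficient at `ψ` of a real function on a finite abelian group. -/
noncomputable def charCoeff (h : G → ℝ) (ψ : AddChar G ℂ) : ℂ := ∑ v, (h v : ℂ) * ψ v

/-- Parseval's identity for convolution with the indicator function of `S`, by orthogonality of
characters. -/
lemma charCoeff_mul_conj_sum [DecidableEq G] (h g : G → ℝ) (S : Finset G) :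
    ∑ ψ : AddChar G ℂ, (∑ s ∈ S, ψ s) * charCoeff h ψ *
        (starRingEnd ℂ) (charCoeff g ψ) =
      (Fintype.card G : ℂ) * ∑ v, (h v : ℂ) * ∑ s ∈ S, (g (v + s) : ℂ) := by
  have h1 : ∀ ψ : AddChar G ℂ, (∑ s ∈ S, ψ s) * charCoeff h ψ *
        (starRingEnd ℂ) (charCoeff g ψ) =
      ∑ s ∈ S, ∑ v, ∑ w, (h v : ℂ) * (g w : ℂ) * ψ (v + s - w) := by
    intro ψ
    unfold charCoeff
    rw [map_sum, Finset.sum_mul, Finset.sum_mul]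
    refine Finset.sum_congr rfl fun s _ => ?_
    simp_rw [Finset.mul_sum, Finset.sum_mul]
    rw [Finset.sum_comm]
    refine Finset.sum_congr rfl fun v _ => ?_
    refine Finset.sum_congr rfl fun w _ => ?_
    rw [sub_eq_add_neg, AddChar.map_add_eq_mul, AddChar.map_add_eq_mul,
      AddChar.map_neg_eq_conj, map_mul, Complex.conj_ofReal]
    ring
  rw [Finset.sum_congr rfl fun ψ _ => h1 ψ, Finset.sum_comm, Finset.mul_sum]
  simp_rw [Finset.mul_sum]
  rw [Finset.sum_comm (s := Finset.univ (α := G))]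
  refine Finset.sum_congr rfl fun s _ => ?_
  rw [Finset.sum_comm]
  refine Finset.sum_congr rfl fun v _ => ?_
  rw [Finset.sum_comm]
  simp_rw [← Finset.mul_sum, AddChar.sum_apply_eq_ite]
  rw [Finset.sum_eq_single (v + s)]
  · simp; ring
  · intro w _ hw
    rw [if_neg, mul_zero]
    exact fun h0 => hw (sub_eq_zero.1 h0).symm
  · simp

/-- Parseval's identity, which is the case `S = {0}` of the previous lemma. -/
lemma sum_norm_charCoeff_sq (h : G → ℝ) :
    ∑ ψ : AddChar G ℂ, ‖charCoeff h ψ‖ ^ 2 = Fintype.card G * ∑ v, h v ^ 2 := by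
  classical
  have := charCoeff_mul_conj_sum h h {0}
  simp only [Finset.sum_singleton, AddChar.map_zero_eq_one, one_mul, add_zero,
    Complex.mul_conj, Complex.normSq_eq_norm_sq] at this
  have h2 : ∀ v, (h v : ℂ) * (h v : ℂ) = ((h v ^ 2 : ℝ) : ℂ) := fun v => by push_cast; ring
  simp_rw [h2] at this
  exact_mod_cast this

/-- The expander mixing lemma for the Cayley graph of a finite abelian group with connection
set `S`, whose nontrivial eigenvalues `∑ s ∈ S, ψ s` are at most `Λ` in absolute value. -/
lemma cayley_mixing (S : Finset G) (Λ : ℝ) (hΛ : 0 ≤ Λ)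
    (hS : ∀ ψ : AddChar G ℂ, ψ ≠ 0 → ‖∑ s ∈ S, ψ s‖ ≤ Λ) (h g : G → ℝ) :
    (S.card : ℝ) * (∑ v, h v) * (∑ v, g v) -
        Λ * Fintype.card G * (√(∑ v, h v ^ 2) * √(∑ v, g v ^ 2)) ≤
      Fintype.card G * ∑ v, h v * ∑ s ∈ S, g (v + s) := by
  classical
  have key := charCoeff_mul_conj_sum h g S
  rw [← Finset.add_sum_erase _ _ (Finset.mem_univ (0 : AddChar G ℂ))] at key
  have h0 : (∑ s ∈ S, (0 : AddChar G ℂ) s) * charCoeff h 0 *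
      (starRingEnd ℂ) (charCoeff g 0) =
      (((S.card : ℝ) * (∑ v, h v) * (∑ v, g v) : ℝ) : ℂ) := by
    simp [charCoeff, AddChar.zero_apply]
  rw [h0] at key
  set R := ∑ ψ ∈ Finset.univ.erase (0 : AddChar G ℂ), (∑ s ∈ S, ψ s) * charCoeff h ψ *
      (starRingEnd ℂ) (charCoeff g ψ) with hR
  have hRn : ‖R‖ ≤ Λ * Fintype.card G * (√(∑ v, h v ^ 2) * √(∑ v, g v ^ 2)) := by
    calc ‖R‖ ≤ ∑ ψ ∈ Finset.univ.erase (0 : AddChar G ℂ),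
          ‖(∑ s ∈ S, ψ s) * charCoeff h ψ * (starRingEnd ℂ) (charCoeff g ψ)‖ :=
          norm_sum_le _ _
      _ ≤ ∑ ψ ∈ Finset.univ.erase (0 : AddChar G ℂ),
          Λ * (‖charCoeff h ψ‖ * ‖charCoeff g ψ‖) := by
          refine Finset.sum_le_sum fun ψ hψ => ?_
          rw [norm_mul, norm_mul, RCLike.norm_conj, mul_assoc]
          exact mul_le_mul_of_nonneg_right (hS ψ (Finset.ne_of_mem_erase hψ)) (by positivity)
      _ ≤ ∑ ψ : AddChar G ℂ, Λ * (‖charCoeff h ψ‖ * ‖charCoeff g ψ‖) :=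
          Finset.sum_le_sum_of_subset_of_nonneg (Finset.subset_univ _)
            fun _ _ _ => by positivity
      _ = Λ * ∑ ψ : AddChar G ℂ, (‖charCoeff h ψ‖ * ‖charCoeff g ψ‖) := by
          rw [Finset.mul_sum]
      _ ≤ Λ * (√(∑ ψ : AddChar G ℂ, ‖charCoeff h ψ‖ ^ 2) *
            √(∑ ψ : AddChar G ℂ, ‖charCoeff g ψ‖ ^ 2)) :=
          mul_le_mul_of_nonneg_left (Real.sum_mul_le_sqrt_mul_sqrt _ _ _) hΛ
      _ = Λ * Fintype.card G * (√(∑ v, h v ^ 2) * √(∑ v, g v ^ 2)) := by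
          rw [sum_norm_charCoeff_sq, sum_norm_charCoeff_sq, Real.sqrt_mul (by positivity),
            Real.sqrt_mul (by positivity)]
          have := Real.mul_self_sqrt (Nat.cast_nonneg (α := ℝ) (Fintype.card G))
          linear_combination Λ * √(∑ v, h v ^ 2) * √(∑ v, g v ^ 2) * this
  have hre := congrArg Complex.re key
  rw [Complex.add_re, Complex.ofReal_re] at hre
  have hrhs : ((Fintype.card G : ℂ) * ∑ v, (h v : ℂ) * ∑ s ∈ S, (g (v + s) : ℂ)).re =
      Fintype.card G * ∑ v, h v * ∑ s ∈ S, g (v + s) := by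
    rw [← Complex.ofReal_re (Fintype.card G * ∑ v, h v * ∑ s ∈ S, g (v + s))]
    congr 1
    push_cast
    rfl
  rw [hrhs] at hre
  have := (abs_le.1 ((Complex.abs_re_le_norm R).trans hRn)).1
  linarith

end Mixing

/-! ### Weighted counting of vertex sequences -/

section PartitionFunction

variable {X : Type*}

/-- The weight of a sequence `φ` of vertices of `Γ`: a factor `r` for each pair of positions
`i < j` holding adjacent vertices. -/
noncomputable def seqWeight (Γ : SimpleGraph X) (r : ℝ) {k : ℕ} (φ : Fin k → X) : ℝ :=
  open Classical in ∏ i, ∏ j, if i < j ∧ Γ.Adj (φ i) (φ j) then r else 1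

/-- The weight function `f` on vertices, updated after `v` has been placed in the sequence: the
neighbours of `v` are penalised by the factor `r`. -/
noncomputable def penalise (Γ : SimpleGraph X) (r : ℝ) (f : X → ℝ) (v w : X) : ℝ :=
  open Classical in f w * if Γ.Adj v w then r else 1

lemma seqWeight_cons (Γ : SimpleGraph X) (r : ℝ) {k : ℕ} (v : X) (φ : Fin k → X) (f : X → ℝ) :
    (∏ i, f ((Fin.cons v φ : Fin (k + 1) → X) i)) *
        seqWeight Γ r (Fin.cons v φ : Fin (k + 1) → X) =
      f v * ((∏ i, penalise Γ r f v (φ i)) * seqWeight Γ r φ) := by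
  classical
  unfold seqWeight penalise
  simp only [Fin.prod_univ_succ, Fin.cons_zero, Fin.cons_succ, Finset.prod_mul_distrib,
    false_and, if_false, one_mul, Fin.succ_pos, true_and, Fin.not_lt_zero,
    Fin.succ_lt_succ_iff]
  ring

lemma sum_seqWeight_succ [Fintype X] (Γ : SimpleGraph X) (r : ℝ) (k : ℕ) (f : X → ℝ) :
    ∑ φ : Fin (k + 1) → X, (∏ i, f (φ i)) * seqWeight Γ r φ =
      ∑ v, f v * ∑ φ : Fin k → X, (∏ i, penalise Γ r f v (φ i)) * seqWeight Γ r φ := by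
  rw [← (Fin.consEquiv fun _ : Fin (k + 1) => X).sum_comp, Fintype.sum_prod_type]
  refine Finset.sum_congr rfl fun v _ => ?_
  rw [Finset.mul_sum]
  exact Finset.sum_congr rfl fun φ _ => seqWeight_cons Γ r v φ f

/-- A one-variable inequality: it makes `max 1 x ^ s` a potential that absorbs
a factor `x` whenever `x` shrinks by `1 - δ`. -/
lemma potential_step {τ δ s x : ℝ} (hδ1 : δ ≤ 1) (hs : 1 ≤ s)
    (hsτ : (1 - δ) ^ s ≤ τ) (hx : 1 ≤ x) (hxτ : x * τ ≤ 1) :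
    x * max 1 ((1 - δ) * x) ^ s ≤ x ^ s := by
  have hx0 : 0 < x := by linarith
  rcases le_total ((1 - δ) * x) 1 with h | h
  · rw [max_eq_left h, Real.one_rpow, mul_one]
    calc x = x ^ (1 : ℝ) := (Real.rpow_one x).symm
      _ ≤ x ^ s := Real.rpow_le_rpow_of_exponent_le hx hs
  · rw [max_eq_right h, Real.mul_rpow (by linarith) hx0.le]
    calc x * ((1 - δ) ^ s * x ^ s) ≤ x * (τ * x ^ s) := by gcongr
      _ = (x * τ) * x ^ s := by ring
      _ ≤ 1 * x ^ s := by gcongr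
      _ = x ^ s := one_mul _

/-- If any two vertex weightings of density at least `τ` span edge density more than `κ`, then a
sequence of `k` vertices typically spans many edges. At each step the vertices whose
neighbourhood captures less than a `κ`-fraction of the current weight have density below `τ`,
and any other choice shrinks the total weight by the factor `1 - (1 - r) * κ`. -/
lemma sum_seqWeight_le [Fintype X] (Γ : SimpleGraph X) {r τ κ s : ℝ} (hr0 : 0 ≤ r) (hr1 : r ≤ 1)
    (hτ : 0 < τ) (hκ0 : 0 ≤ κ) (hκ1 : κ ≤ 1) (hs : 1 ≤ s)
    (hsτ : (1 - (1 - r) * κ) ^ s ≤ τ)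
    (hmix : open Classical in ∀ f h : X → ℝ, (∀ v, 0 ≤ f v) → (∀ v, f v ≤ 1) →
      (∀ v, 0 ≤ h v) → (∀ v, h v ≤ 1) →
      τ * Fintype.card X ≤ ∑ v, f v → τ * Fintype.card X ≤ ∑ v, h v →
      κ * (∑ v, h v) * (∑ v, f v) < ∑ v, h v * ∑ w, if Γ.Adj v w then f w else 0) (k : ℕ) :
    ∀ f : X → ℝ, (∀ v, 0 ≤ f v) → (∀ v, f v ≤ 1) →
      ∑ φ : Fin k → X, (∏ i, f (φ i)) * seqWeight Γ r φ ≤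
        (2 * τ * Fintype.card X) ^ k * max 1 ((∑ v, f v) / (τ * Fintype.card X)) ^ s := by
  classical
  induction k with
  | zero =>
    intro f _ _
    have : (1 : ℝ) ≤ max 1 ((∑ v, f v) / (τ * Fintype.card X)) ^ s :=
      Real.one_le_rpow (le_max_left _ _) (by linarith)
    simpa [seqWeight] using this
  | succ k ih =>
    intro f hf0 hf1
    rw [sum_seqWeight_succ]
    rcases isEmpty_or_nonempty X with hX | hX
    · simp
    set N : ℝ := (Fintype.card X : ℝ) with hN
    have hNpos : 0 < N := by rw [hN]; exact_mod_cast Fintype.card_pos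
    have hτN : 0 < τ * N := by positivity
    set δ := (1 - r) * κ with hδ
    have hδ0 : 0 ≤ δ := mul_nonneg (by linarith) hκ0
    have hδ1 : δ ≤ 1 := by nlinarith
    set M := ∑ v, f v with hM
    have hM0 : 0 ≤ M := Finset.sum_nonneg fun v _ => hf0 v
    have hMN : M ≤ N := by
      calc M ≤ ∑ _v : X, (1 : ℝ) := Finset.sum_le_sum fun v _ => hf1 v
        _ = N := by simp [hN]
    have hpen : ∀ v w, 0 ≤ penalise Γ r f v w ∧ penalise Γ r f v w ≤ f w := by
      intro v w
      unfold penalise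
      split_ifs
      · exact ⟨mul_nonneg (hf0 w) hr0, mul_le_of_le_one_right (hf0 w) hr1⟩
      · simp [hf0 w]
    have hpensum : ∀ v, ∑ w, penalise Γ r f v w =
        M - (1 - r) * ∑ w, if Γ.Adj v w then f w else 0 := by
      intro v
      rw [hM, Finset.mul_sum, ← Finset.sum_sub_distrib]
      refine Finset.sum_congr rfl fun w _ => ?_
      unfold penalise
      split_ifs <;> ring
    have hP : 0 ≤ (2 * τ * N) ^ k := by positivity
    have hstep : ∀ v y, (∑ w, penalise Γ r f v w) ≤ y →
        ∑ φ : Fin k → X, (∏ i, penalise Γ r f v (φ i)) * seqWeight Γ r φ ≤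
          (2 * τ * N) ^ k * max 1 (y / (τ * N)) ^ s := by
      intro v y hy
      refine (ih _ (fun w => (hpen v w).1) fun w => (hpen v w).2.trans (hf1 w)).trans ?_
      gcongr
    have hle : ∀ v, (∑ w, penalise Γ r f v w) ≤ M := fun v =>
      Finset.sum_le_sum fun w _ => (hpen v w).2
    rcases lt_or_ge M (τ * N) with hsmall | hbig
    · have hx1 : M / (τ * N) ≤ 1 := (div_le_one hτN).2 hsmall.le
      calc ∑ v, f v * ∑ φ : Fin k → X, (∏ i, penalise Γ r f v (φ i)) * seqWeight Γ r φ
          ≤ ∑ v, f v * ((2 * τ * N) ^ k * max 1 (M / (τ * N)) ^ s) :=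
            Finset.sum_le_sum fun v _ =>
              mul_le_mul_of_nonneg_left (hstep v M (hle v)) (hf0 v)
        _ = M * ((2 * τ * N) ^ k * max 1 (M / (τ * N)) ^ s) := by rw [← Finset.sum_mul]
        _ ≤ (2 * τ * N) * ((2 * τ * N) ^ k * max 1 (M / (τ * N)) ^ s) := by
            gcongr
            nlinarith
        _ = _ := by ring
    · set x := M / (τ * N) with hx
      have hx1 : 1 ≤ x := (one_le_div hτN).2 hbig
      have hMx : M = x * (τ * N) := by rw [hx]; field_simp
      have hxτ : x * τ ≤ 1 := by
        have h1 : x * τ * N ≤ 1 * N := by linarith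
        exact le_of_mul_le_mul_right h1 hNpos
      -- the exceptional vertices, whose neighbourhoods carry too little of the weight
      set B : X → Prop := fun v => (∑ w, if Γ.Adj v w then f w else 0) ≤ κ * M with hB
      have hBsum : ∑ v, (if B v then f v else 0) ≤ τ * N := by
        by_contra hcon
        push Not at hcon
        have h1 := hmix f (fun v => if B v then f v else 0) hf0 hf1
          (fun v => by split_ifs <;> simp [hf0 v])
          (fun v => by split_ifs <;> simp [hf1 v]) hbig hcon.le
        have h2 : ∑ v, (if B v then f v else 0) * (∑ w, if Γ.Adj v w then f w else 0) ≤
            ∑ v, (if B v then f v else 0) * (κ * M) := by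
          refine Finset.sum_le_sum fun v _ => ?_
          split_ifs with hv
          · exact mul_le_mul_of_nonneg_left hv (hf0 v)
          · simp
        rw [← Finset.sum_mul] at h2
        linarith
      have hterm : ∀ v, f v * ∑ φ : Fin k → X,
            (∏ i, penalise Γ r f v (φ i)) * seqWeight Γ r φ ≤
          (if B v then f v else 0) * ((2 * τ * N) ^ k * x ^ s) +
            f v * ((2 * τ * N) ^ k * max 1 ((1 - δ) * x) ^ s) := by
        intro v
        by_cases hv : B v
        · rw [if_pos hv]
          have h1 := mul_le_mul_of_nonneg_left (hstep v M (hle v)) (hf0 v)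
          rw [← hx, max_eq_right hx1] at h1
          have h2 : 0 ≤ f v * ((2 * τ * N) ^ k * max 1 ((1 - δ) * x) ^ s) :=
            mul_nonneg (hf0 v) (by positivity)
          linarith
        · rw [if_neg hv, zero_mul, zero_add]
          have h1 : (∑ w, penalise Γ r f v w) ≤ (1 - δ) * M := by
            rw [hpensum]
            have : κ * M ≤ ∑ w, if Γ.Adj v w then f w else 0 := (not_le.1 hv).le
            nlinarith [mul_le_mul_of_nonneg_left this (sub_nonneg.2 hr1)]
          have h2 := mul_le_mul_of_nonneg_left (hstep v _ h1) (hf0 v)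
          rwa [mul_div_assoc, ← hx] at h2
      calc ∑ v, f v * ∑ φ : Fin k → X, (∏ i, penalise Γ r f v (φ i)) * seqWeight Γ r φ
          ≤ ∑ v, ((if B v then f v else 0) * ((2 * τ * N) ^ k * x ^ s) +
            f v * ((2 * τ * N) ^ k * max 1 ((1 - δ) * x) ^ s)) :=
            Finset.sum_le_sum fun v _ => hterm v
        _ = (∑ v, if B v then f v else 0) * ((2 * τ * N) ^ k * x ^ s) +
            M * ((2 * τ * N) ^ k * max 1 ((1 - δ) * x) ^ s) := by
            rw [Finset.sum_add_distrib, ← Finset.sum_mul, ← Finset.sum_mul]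
        _ = (∑ v, if B v then f v else 0) * ((2 * τ * N) ^ k * x ^ s) +
            τ * N * (2 * τ * N) ^ k * (x * max 1 ((1 - δ) * x) ^ s) := by
            linear_combination ((2 * τ * N) ^ k * max 1 ((1 - δ) * x) ^ s) * hMx
        _ ≤ τ * N * ((2 * τ * N) ^ k * x ^ s) + τ * N * (2 * τ * N) ^ k * x ^ s := by
            have := potential_step hδ1 hs hsτ hx1 hxτ
            have hxs : 0 ≤ x ^ s := Real.rpow_nonneg (by linarith) _
            gcongr
        _ = (2 * τ * N) ^ (k + 1) * max 1 x ^ s := by rw [max_eq_right hx1]; ring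

end PartitionFunction

/-! ### The pseudorandom triangle-free graph -/

section Construction

variable (p : ℕ) [Fact p.Prime]

/-- The ambient group: a point of the affine space `𝔽_p³` with one bit for each of the `p`
directions `(1, t, t²)` on the moment curve. -/
abbrev PointBits (p : ℕ) : Type := (ZMod p × ZMod p × ZMod p) × (ZMod p → ZMod 2)

/-- The element `(c • (1, t, t²), ε)`. -/
def dirElem {p : ℕ} (t c : ZMod p) (ε : ZMod p → ZMod 2) : PointBits p :=
  ((c, c * t, c * t ^ 2), ε)

/-- The differences of adjacent vertices: the points differ by a nonzero multiple of
`(1, t, t²)` for some `t`, and the bits in direction `t` differ. -/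
noncomputable def connSet : Finset (PointBits p) :=
  open Classical in Finset.univ.filter fun g => ∃ t c ε, c ≠ 0 ∧ ε t = 1 ∧ g = dirElem t c ε

variable {p}

lemma dirElem_injective {t c t' c' : ZMod p} {ε ε' : ZMod p → ZMod 2} (hc : c ≠ 0)
    (h : dirElem t c ε = dirElem t' c' ε') : t = t' ∧ c = c' ∧ ε = ε' := by
  simp only [dirElem, Prod.mk.injEq] at h
  obtain ⟨⟨h1, h2, -⟩, h3⟩ := h
  subst h1
  exact ⟨mul_left_cancel₀ hc h2, rfl, h3⟩

lemma mem_connSet {g : PointBits p} :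
    g ∈ connSet p ↔ ∃ t c ε, c ≠ 0 ∧ ε t = 1 ∧ g = dirElem t c ε := by
  simp [connSet]

open Classical in
lemma sum_connSet {M : Type*} [AddCommMonoid M] (F : PointBits p → M) :
    ∑ s ∈ connSet p, F s = ∑ t : ZMod p, ∑ c ∈ Finset.univ.filter (fun c : ZMod p => c ≠ 0),
      ∑ ε ∈ Finset.univ.filter (fun ε : ZMod p → ZMod 2 => ε t = 1), F (dirElem t c ε) := by
  have h1 : connSet p = ((Finset.univ : Finset (ZMod p × ZMod p × (ZMod p → ZMod 2))).filter
      fun x => x.2.1 ≠ 0 ∧ x.2.2 x.1 = 1).image fun x => dirElem x.1 x.2.1 x.2.2 := by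
    ext g
    simp only [mem_connSet, Finset.mem_image, Finset.mem_filter, Finset.mem_univ, true_and,
      Prod.exists]
    constructor
    · rintro ⟨t, c, ε, h1, h2, h3⟩
      exact ⟨t, c, ε, ⟨h1, h2⟩, h3.symm⟩
    · rintro ⟨t, c, ε, ⟨h1, h2⟩, h3⟩
      exact ⟨t, c, ε, h1, h2, h3.symm⟩
  rw [h1, Finset.sum_image]
  · rw [Finset.sum_filter, Fintype.sum_prod_type]
    refine Finset.sum_congr rfl fun t _ => ?_
    rw [Fintype.sum_prod_type, Finset.sum_filter]
    refine Finset.sum_congr rfl fun c _ => ?_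
    by_cases hc : c = 0
    · simp [hc]
    · simp [hc, Finset.sum_filter]
  · rintro ⟨t, c, ε⟩ hx ⟨t', c', ε'⟩ _ h
    simp only [Finset.coe_filter, Set.mem_ofPred_eq] at hx
    obtain ⟨rfl, rfl, rfl⟩ := dirElem_injective hx.2.1 h
    rfl

open Classical in
lemma card_bits (t : ZMod p) :
    ((Finset.univ.filter (fun ε : ZMod p → ZMod 2 => ε t = 1)).card : ℝ) = 2 ^ (p - 1) := by
  have h1 : (Finset.univ.filter (fun ε : ZMod p → ZMod 2 => ε t = 1)).card =
      (Finset.univ.filter (fun ε : ZMod p → ZMod 2 => ¬ ε t = 1)).card := by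
    refine Finset.card_bij' (fun ε _ => ε + Pi.single t 1) (fun ε _ => ε + Pi.single t 1)
      ?_ ?_ ?_ ?_
    · intro ε h
      simp only [Finset.mem_filter, Finset.mem_univ, true_and, Pi.add_apply,
        Pi.single_eq_same] at h ⊢
      rw [h]; decide
    · intro ε h
      simp only [Finset.mem_filter, Finset.mem_univ, true_and, Pi.add_apply,
        Pi.single_eq_same] at h ⊢
      revert h
      generalize ε t = a
      revert a
      decide
    · intro ε _
      rw [add_assoc, ← Pi.single_add, show (1 : ZMod 2) + 1 = 0 by decide, Pi.single_zero,
        add_zero]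
    · intro ε _
      rw [add_assoc, ← Pi.single_add, show (1 : ZMod 2) + 1 = 0 by decide, Pi.single_zero,
        add_zero]
  have h2 := Finset.card_filter_add_card_filter_not (s := Finset.univ)
    (fun ε : ZMod p → ZMod 2 => ε t = 1)
  rw [← h1] at h2
  have h3 : (Finset.univ : Finset (ZMod p → ZMod 2)).card = 2 * 2 ^ (p - 1) := by
    rw [Finset.card_univ, Fintype.card_fun, ZMod.card, ZMod.card, ← pow_succ',
      Nat.sub_add_cancel (Fact.out : p.Prime).one_le]
  rw [h3] at h2
  have h4 : (Finset.univ.filter (fun ε : ZMod p → ZMod 2 => ε t = 1)).card = 2 ^ (p - 1) := by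
    omega
  rw [h4]; norm_num

lemma card_ne_zero : ((Finset.univ.filter (fun c : ZMod p => c ≠ 0)).card : ℝ) = p - 1 := by
  rw [Finset.filter_ne', Finset.card_erase_of_mem (Finset.mem_univ _), Finset.card_univ,
    ZMod.card, Nat.cast_sub (Fact.out : p.Prime).one_le, Nat.cast_one]

lemma card_connSet : ((connSet p).card : ℝ) = p * (p - 1) * 2 ^ (p - 1) := by
  classical
  have h := sum_connSet (p := p) (fun _ => (1 : ℝ))
  simp only [Finset.sum_const, nsmul_eq_mul, mul_one] at h
  rw [h]
  simp only [card_bits, card_ne_zero, Finset.sum_const, nsmul_eq_mul, Finset.card_univ, ZMod.card]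
  ring

lemma card_pointBits : (Fintype.card (PointBits p) : ℝ) = 2 * 2 ^ (p - 1) * p ^ 3 := by
  rw [Fintype.card_prod, Fintype.card_prod, Fintype.card_prod, Fintype.card_fun, ZMod.card,
    ZMod.card, ← pow_succ', Nat.sub_add_cancel (Fact.out : p.Prime).one_le]
  push_cast
  ring

/-- No character that is nontrivial on points is trivial on three of the directions, since
three distinct vectors on the moment curve form a basis. -/
lemma trivial_of_three {ψ : AddChar (PointBits p) ℂ} {t₁ t₂ t₃ : ZMod p} (h₁₂ : t₁ ≠ t₂)
    (h₁₃ : t₁ ≠ t₃) (h₂₃ : t₂ ≠ t₃) (h₁ : ∀ c, ψ (dirElem t₁ c 0) = 1)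
    (h₂ : ∀ c, ψ (dirElem t₂ c 0) = 1) (h₃ : ∀ c, ψ (dirElem t₃ c 0) = 1)
    (x : ZMod p × ZMod p × ZMod p) : ψ (x, 0) = 1 := by
  obtain ⟨x, y, z⟩ := x
  have e₁₂ := sub_ne_zero.2 h₁₂
  have e₁₃ := sub_ne_zero.2 h₁₃
  have e₂₃ := sub_ne_zero.2 h₂₃
  -- the coefficients come from Lagrange interpolation
  obtain ⟨c₁, c₂, c₃, hx, hy, hz⟩ : ∃ c₁ c₂ c₃ : ZMod p, x = c₁ + c₂ + c₃ ∧
      y = c₁ * t₁ + c₂ * t₂ + c₃ * t₃ ∧ z = c₁ * t₁ ^ 2 + c₂ * t₂ ^ 2 + c₃ * t₃ ^ 2 := by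
    refine ⟨(z - (t₂ + t₃) * y + t₂ * t₃ * x) / ((t₁ - t₂) * (t₁ - t₃)),
      -(z - (t₁ + t₃) * y + t₁ * t₃ * x) / ((t₁ - t₂) * (t₂ - t₃)),
      (z - (t₁ + t₂) * y + t₁ * t₂ * x) / ((t₁ - t₃) * (t₂ - t₃)), ?_, ?_, ?_⟩ <;>
    · field_simp
      ring
  have : (((x, y, z), 0) : PointBits p) = dirElem t₁ c₁ 0 + dirElem t₂ c₂ 0 + dirElem t₃ c₃ 0 := by
    simp [dirElem, hx, hy, hz]
  rw [this, AddChar.map_add_eq_mul, AddChar.map_add_eq_mul, h₁, h₂, h₃]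
  norm_num

/-- A nontrivial character of the line in direction `t` sums to `-1` over its nonzero points. -/
lemma sum_line (ψ : AddChar (PointBits p) ℂ) (t : ZMod p)
    (h : ¬ ∀ c, ψ (dirElem t c 0) = 1) :
    ∑ c ∈ Finset.univ.filter (fun c : ZMod p => c ≠ 0), ψ (dirElem t c 0) = -1 := by
  push Not at h
  obtain ⟨c₀, hc₀⟩ := h
  have hadd : ∀ a b : ZMod p, dirElem t (a + b) 0 = dirElem t a 0 + dirElem t b 0 := by
    intro a b
    simp [dirElem, add_mul]
  have h1 : ∑ c : ZMod p, ψ (dirElem t c 0) = 0 := by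
    have h2 : ψ (dirElem t c₀ 0) * ∑ c : ZMod p, ψ (dirElem t c 0) =
        ∑ c : ZMod p, ψ (dirElem t c 0) := by
      rw [Finset.mul_sum]
      simp_rw [← AddChar.map_add_eq_mul, ← hadd]
      exact Equiv.sum_comp (Equiv.addLeft c₀) fun c => ψ (dirElem t c 0)
    have h3 : (ψ (dirElem t c₀ 0) - 1) * ∑ c : ZMod p, ψ (dirElem t c 0) = 0 := by
      rw [sub_mul, h2, one_mul, sub_self]
    exact (mul_eq_zero.1 h3).resolve_left (sub_ne_zero.2 hc₀)
  rw [Finset.filter_ne', ← Finset.add_sum_erase _ _ (Finset.mem_univ (0 : ZMod p))] at *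
  have h4 : ψ (dirElem t 0 0) = 1 := by
    have : (dirElem t 0 0 : PointBits p) = 0 := by simp [dirElem]
    rw [this, AddChar.map_zero_eq_one]
  rw [h4] at h1
  linear_combination h1

open Classical in
/-- The bit vectors with `ε t = 1` form a coset of those with `ε t = 0`, so a character that is
nontrivial on the latter sums to zero over the former. -/
lemma sum_bits (ψ : AddChar (PointBits p) ℂ) (t : ZMod p) {ε₀ : ZMod p → ZMod 2}
    (hε₀ : ε₀ t = 0) (h : ψ (0, ε₀) ≠ 1) :
    ∑ ε ∈ Finset.univ.filter (fun ε : ZMod p → ZMod 2 => ε t = 1), ψ (0, ε) = 0 := by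
  set F := Finset.univ.filter (fun ε : ZMod p → ZMod 2 => ε t = 1) with hF
  have h2 : ψ (0, ε₀) * ∑ ε ∈ F, ψ (0, ε) = ∑ ε ∈ F, ψ (0, ε) := by
    rw [Finset.mul_sum]
    refine Finset.sum_bij' (fun ε _ => ε₀ + ε) (fun ε _ => -ε₀ + ε) ?_ ?_ ?_ ?_ ?_
    · intro ε hε; simpa [hF, hε₀] using hε
    · intro ε hε; simpa [hF, hε₀] using hε
    · intro ε _; simp
    · intro ε _; simp
    · intro ε _
      rw [← AddChar.map_add_eq_mul, Prod.mk_add_mk, add_zero]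
  have h3 : (ψ (0, ε₀) - 1) * ∑ ε ∈ F, ψ (0, ε) = 0 := by
    rw [sub_mul, h2, one_mul, sub_self]
  exact (mul_eq_zero.1 h3).resolve_left (sub_ne_zero.2 h)

/-- The nontrivial eigenvalues are a factor `p - 1` below the degree. A character trivial on all
bits is trivial on at most two of the `p` directions; any other character is trivial on
`{ε | ε t = 0}` for at most one `t`. -/
lemma norm_sum_connSet_le (ψ : AddChar (PointBits p) ℂ) (hψ : ψ ≠ 0) :
    ‖∑ s ∈ connSet p, ψ s‖ ≤ 2 ^ (p - 1) * p := by
  classical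
  have hp1 : (1 : ℝ) ≤ p := by exact_mod_cast (Fact.out : p.Prime).one_le
  set L : ZMod p → ℂ := fun t =>
    ∑ c ∈ Finset.univ.filter (fun c : ZMod p => c ≠ 0), ψ (dirElem t c 0) with hL
  set E : ZMod p → ℂ := fun t =>
    ∑ ε ∈ Finset.univ.filter (fun ε : ZMod p → ZMod 2 => ε t = 1), ψ (0, ε) with hE
  have hsum : ∑ s ∈ connSet p, ψ s = ∑ t, L t * E t := by
    rw [sum_connSet]
    refine Finset.sum_congr rfl fun t _ => ?_
    rw [hL, hE, Finset.sum_mul_sum]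
    refine Finset.sum_congr rfl fun c _ => Finset.sum_congr rfl fun ε _ => ?_
    rw [← AddChar.map_add_eq_mul]
    simp [dirElem]
  rw [hsum]
  by_cases hbits : ∀ ε, ψ (0, ε) = 1
  · have hE1 : ∀ t, E t = ((2 ^ (p - 1) : ℝ) : ℂ) := by
      intro t
      rw [hE, ← card_bits t]
      simp [hbits]
    set T := Finset.univ.filter (fun t : ZMod p => ∀ c, ψ (dirElem t c 0) = 1) with hT
    have hT2 : T.card ≤ 2 := by
      by_contra hcon
      push Not at hcon
      obtain ⟨t₁, t₂, t₃, h₁, h₂, h₃, h₁₂, h₁₃, h₂₃⟩ := Finset.two_lt_card_iff.1 hcon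
      simp only [hT, Finset.mem_filter, Finset.mem_univ, true_and] at h₁ h₂ h₃
      apply hψ
      ext ⟨x, ε⟩
      have : ((x, ε) : PointBits p) = (x, 0) + (0, ε) := by simp
      rw [this, AddChar.map_add_eq_mul, trivial_of_three h₁₂ h₁₃ h₂₃ h₁ h₂ h₃, hbits]
      simp
    have hL1 : ∀ t, L t = (((if t ∈ T then (p : ℝ) else 0) - 1 : ℝ) : ℂ) := by
      intro t
      by_cases ht : t ∈ T
      · have h2 : ∀ c, ψ (dirElem t c 0) = 1 := by simpa [hT] using ht
        rw [if_pos ht, ← card_ne_zero]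
        simp [hL, h2]
      · have h2 : ¬ ∀ c, ψ (dirElem t c 0) = 1 := by simpa [hT] using ht
        rw [if_neg ht]
        simpa using sum_line ψ t h2
    have hval : ∑ t, L t * E t = ((((T.card : ℝ) * p - p) * 2 ^ (p - 1) : ℝ) : ℂ) := by
      simp_rw [hL1, hE1, ← Finset.sum_mul]
      rw [← Complex.ofReal_sum, ← Complex.ofReal_mul, Finset.sum_sub_distrib,
        Finset.sum_ite_mem]
      simp [ZMod.card]
    rw [hval, Complex.norm_real, Real.norm_eq_abs, abs_mul, abs_of_pos (a := (2 : ℝ) ^ (p - 1))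
      (by positivity), mul_comm]
    gcongr
    have hT2' : (T.card : ℝ) ≤ 2 := by exact_mod_cast hT2
    rw [abs_le]
    constructor <;> nlinarith [Nat.cast_nonneg (α := ℝ) T.card]
  · have hLn : ∀ t, ‖L t‖ ≤ p := by
      intro t
      refine (norm_sum_le _ _).trans ?_
      simp only [AddChar.norm_apply, Finset.sum_const, nsmul_eq_mul, mul_one, card_ne_zero]
      linarith
    have hEn : ∀ t, ‖E t‖ ≤ 2 ^ (p - 1) := by
      intro t
      refine (norm_sum_le _ _).trans ?_
      simp only [AddChar.norm_apply, Finset.sum_const, nsmul_eq_mul, mul_one, card_bits, le_refl]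
    have huniq : ∀ t t', E t ≠ 0 → E t' ≠ 0 → t = t' := by
      intro t t' ht ht'
      by_contra hne
      apply hbits
      intro ε
      have h1 : ∀ ε₀ : ZMod p → ZMod 2, ε₀ t = 0 → ψ (0, ε₀) = 1 := fun ε₀ h0 => by
        by_contra h; exact ht (sum_bits ψ t h0 h)
      have h2 : ∀ ε₀ : ZMod p → ZMod 2, ε₀ t' = 0 → ψ (0, ε₀) = 1 := fun ε₀ h0 => by
        by_contra h; exact ht' (sum_bits ψ t' h0 h)
      have : ((0, ε) : PointBits p) =
          (0, ε - Pi.single t (ε t)) + (0, Pi.single t (ε t)) := by simp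
      rw [this, AddChar.map_add_eq_mul, h1 _ (by simp),
        h2 _ (by simp [Ne.symm hne]), one_mul]
    by_cases hex : ∃ t, E t ≠ 0
    · obtain ⟨t, ht⟩ := hex
      rw [Finset.sum_eq_single t]
      · rw [norm_mul, mul_comm]
        exact mul_le_mul (hEn t) (hLn t) (norm_nonneg _) (by positivity)
      · intro t' _ hne
        have : E t' = 0 := by
          by_contra h; exact hne (huniq _ _ h ht)
        rw [this, mul_zero]
      · simp
    · push Not at hex
      simp [hex]

variable (p)

/-- The triangle-free pseudorandom graph on `PointBits p`. -/
noncomputable def pbGraph : SimpleGraph (PointBits p) where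
  Adj v w := w - v ∈ connSet p
  symm := ⟨by
    intro v w h
    obtain ⟨t, c, ε, hc, hε, h⟩ := mem_connSet.1 h
    refine mem_connSet.2 ⟨t, -c, -ε, neg_ne_zero.2 hc, ?_, ?_⟩
    · rw [Pi.neg_apply, hε]; decide
    · rw [← neg_sub, h]; simp [dirElem]⟩
  loopless := ⟨by
    intro v h
    rw [sub_self] at h
    obtain ⟨t, c, ε, hc, hε, h⟩ := mem_connSet.1 h
    exact hc (congrArg (fun g : PointBits p => g.1.1) h).symm⟩

/-- In a triangle the three directions would be linearly dependent, hence equal; but then three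
bits would be pairwise different. -/
lemma pbGraph_triangle_free {u v w : PointBits p} (huv : (pbGraph p).Adj u v)
    (hvw : (pbGraph p).Adj v w) (huw : (pbGraph p).Adj u w) : False := by
  obtain ⟨t₁, c₁, ε₁, hc₁, hε₁, h₁⟩ := mem_connSet.1 huv
  obtain ⟨t₂, c₂, ε₂, hc₂, hε₂, h₂⟩ := mem_connSet.1 hvw
  obtain ⟨t₃, c₃, ε₃, hc₃, hε₃, h₃⟩ := mem_connSet.1 huw
  have h : dirElem t₁ c₁ ε₁ + dirElem t₂ c₂ ε₂ = dirElem t₃ c₃ ε₃ := by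
    rw [← h₁, ← h₂, ← h₃]; abel
  simp only [dirElem, Prod.mk_add_mk, Prod.mk.injEq] at h
  obtain ⟨⟨e1, e2, e3⟩, e4⟩ := h
  have k : c₁ * ((t₁ - t₃) * (t₁ - t₂)) = 0 := by
    linear_combination e3 - (t₂ + t₃) * e2 + t₂ * t₃ * e1
  have hall : t₁ = t₃ ∧ t₂ = t₃ := by
    rcases mul_eq_zero.1 ((mul_eq_zero.1 k).resolve_left hc₁) with h | h
    · have h13 := sub_eq_zero.1 h
      have : c₂ * (t₂ - t₃) = 0 := by linear_combination e2 - t₃ * e1 - c₁ * h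
      exact ⟨h13, sub_eq_zero.1 ((mul_eq_zero.1 this).resolve_left hc₂)⟩
    · have h12 := sub_eq_zero.1 h
      have : c₃ * (t₁ - t₃) = 0 := by linear_combination e2 - t₁ * e1 + c₂ * h
      have h13 := sub_eq_zero.1 ((mul_eq_zero.1 this).resolve_left hc₃)
      exact ⟨h13, h12 ▸ h13⟩
  obtain ⟨rfl, rfl⟩ := hall
  have := congrFun e4 t₂
  rw [Pi.add_apply, hε₁, hε₂, hε₃] at this
  exact absurd this (by decide)

/-- Sets of density at least `4 / p` see the edge density of the whole graph, up to a constant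
factor. -/
lemma pbGraph_mixing (f h : PointBits p → ℝ) (hf0 : ∀ v, 0 ≤ f v) (hf1 : ∀ v, f v ≤ 1)
    (hh0 : ∀ v, 0 ≤ h v) (hh1 : ∀ v, h v ≤ 1)
    (hf : 4 / (p : ℝ) * Fintype.card (PointBits p) ≤ ∑ v, f v)
    (hh : 4 / (p : ℝ) * Fintype.card (PointBits p) ≤ ∑ v, h v) :
    open Classical in 1 / (16 * (p : ℝ)) * (∑ v, h v) * (∑ v, f v) <
      ∑ v, h v * ∑ w, if (pbGraph p).Adj v w then f w else 0 := by
  classical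
  have hp2 : (2 : ℝ) ≤ p := by exact_mod_cast (Fact.out : p.Prime).two_le
  have hadj : ∀ v, (∑ w, if (pbGraph p).Adj v w then f w else 0) =
      ∑ s ∈ connSet p, f (v + s) := by
    intro v
    rw [← Finset.sum_filter]
    refine Finset.sum_bij' (fun w _ => w - v) (fun s _ => v + s) ?_ ?_ ?_ ?_ ?_
    · intro w hw; exact (Finset.mem_filter.1 hw).2
    · intro s hs
      refine Finset.mem_filter.2 ⟨Finset.mem_univ _, ?_⟩
      change v + s - v ∈ connSet p
      rwa [add_sub_cancel_left]
    · intro w _; simp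
    · intro s _; simp
    · intro w _; simp
  simp_rw [hadj]
  have hmix := cayley_mixing (connSet p) (2 ^ (p - 1) * p) (by positivity) norm_sum_connSet_le h f
  have hsq : ∀ g : PointBits p → ℝ, (∀ v, 0 ≤ g v) → (∀ v, g v ≤ 1) →
      √(∑ v, g v ^ 2) ≤ √(∑ v, g v) := fun g h0 h1 =>
    Real.sqrt_le_sqrt (Finset.sum_le_sum fun v _ => by nlinarith [h0 v, h1 v])
  have hprod := mul_le_mul (hsq h hh0 hh1) (hsq f hf0 hf1) (Real.sqrt_nonneg _)
    (Real.sqrt_nonneg _)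
  set T := ∑ v, h v * ∑ s ∈ connSet p, f (v + s)
  set A := ∑ v, h v
  set B := ∑ v, f v
  set D : ℝ := (Fintype.card (PointBits p) : ℝ) with hD
  set H : ℝ := 2 ^ (p - 1) with hH
  have hDval : D = 2 * H * p ^ 3 := card_pointBits
  have hHpos : 0 < H := by positivity
  have hDpos : 0 < D := by rw [hDval]; positivity
  have hD4 : 0 < 4 / (p : ℝ) * D := by positivity
  have hA : 0 < A := by linarith
  have hB : 0 < B := by linarith
  set a := √A
  set b := √B
  have ha : 0 < a := Real.sqrt_pos.2 hA
  have hb : 0 < b := Real.sqrt_pos.2 hB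
  have haa : a * a = A := Real.mul_self_sqrt hA.le
  have hbb : b * b = B := Real.mul_self_sqrt hB.le
  have hab : 4 / (p : ℝ) * D ≤ a * b := by
    have h1 : √(4 / (p : ℝ) * D) ≤ a := Real.sqrt_le_sqrt hh
    have h2 : √(4 / (p : ℝ) * D) ≤ b := Real.sqrt_le_sqrt hf
    calc 4 / (p : ℝ) * D = √(4 / (p : ℝ) * D) * √(4 / (p : ℝ) * D) :=
          (Real.mul_self_sqrt hD4.le).symm
      _ ≤ a * b := mul_le_mul h1 h2 (Real.sqrt_nonneg _) ha.le
  have hab' : D ≤ p / 4 * (a * b) := by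
    have := mul_le_mul_of_nonneg_left hab (show 0 ≤ (p : ℝ) / 4 by positivity)
    calc D = (p : ℝ) / 4 * (4 / p * D) := by field_simp
      _ ≤ _ := this
  rw [card_connSet] at hmix
  have hmix2 : H * p * (p / 4) * (A * B) ≤ D * T := by
    have h1 : H * p * D * (√(∑ v, h v ^ 2) * √(∑ v, f v ^ 2)) ≤ H * p * D * (a * b) := by
      gcongr
    have h2 : H * p * D * (a * b) ≤ H * p * (p / 4 * (a * b)) * (a * b) := by
      gcongr
    have h3 : H * p * (p / 4 * (a * b)) * (a * b) = H * p * (p / 4) * (A * B) := by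
      rw [← haa, ← hbb]; ring
    have h4 : 0 ≤ H * p * (A * B) * (p / 2 - 1) :=
      mul_nonneg (by positivity) (by linarith)
    linarith
  have hlt : D * (1 / (16 * (p : ℝ)) * A * B) < D * T := by
    refine lt_of_lt_of_le ?_ hmix2
    rw [hDval]
    have : 2 * H * p ^ 3 * (1 / (16 * (p : ℝ)) * A * B) = H * p * (p / 8) * (A * B) := by
      field_simp; ring
    rw [this]
    have : 0 < H * p * (A * B) * p := by positivity
    linarith
  exact lt_of_mul_lt_mul_left hlt hDpos.le

end Construction

/-! ### The first moment argument -/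

section UnionBound

lemma card_edgeSet_le_turanNum {V : Type*} (F : SimpleGraph V) {m : ℕ} (H : SimpleGraph (Fin m))
    (hH : ¬ ContainsCopy F H) : Nat.card H.edgeSet ≤ turanNum m F := by
  refine le_csSup ⟨Nat.card (Sym2 (Fin m)), ?_⟩ ⟨H, hH, rfl⟩
  rintro k ⟨G, -, rfl⟩
  exact Nat.card_le_card_of_injective _ Subtype.val_injective

/-- The weight of a sequence is `r` to the number of adjacent index pairs, which is the number
of edges of the graph induced by the sequence on its index set. -/
lemma pow_card_edgeSet_le_seqWeight {X : Type*} (Γ : SimpleGraph X) {r : ℝ} (hr0 : 0 ≤ r)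
    (hr1 : r ≤ 1) {m : ℕ} (φ : Fin m → X) :
    r ^ Nat.card (Γ.comap φ).edgeSet ≤ seqWeight Γ r φ := by
  classical
  have h1 : seqWeight Γ r φ = r ^ (Finset.univ.filter
      fun x : Fin m × Fin m => x.1 < x.2 ∧ Γ.Adj (φ x.1) (φ x.2)).card := by
    unfold seqWeight
    rw [← Fintype.prod_prod_type' (f := fun i j => if i < j ∧ Γ.Adj (φ i) (φ j) then r else 1),
      ← Finset.prod_filter, Finset.prod_const]
  rw [h1]
  refine pow_le_pow_of_le_one hr0 hr1 ?_
  rw [Nat.card_eq_fintype_card, ← SimpleGraph.edgeFinset_card]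
  refine Finset.card_le_card_of_injOn (fun x => s(x.1, x.2)) ?_ ?_
  · intro x hx
    simpa using (Finset.mem_filter.1 hx).2.2
  · rintro ⟨i, j⟩ hx ⟨i', j'⟩ hy h
    have h1 : i < j := (Finset.mem_filter.1 hx).2.1
    have h2 : i' < j' := (Finset.mem_filter.1 hy).2.1
    rcases Sym2.eq_iff.1 h with ⟨h3, h4⟩ | ⟨h3, h4⟩
    · exact Prod.ext h3 h4
    · dsimp only at h3 h4
      subst h3 h4
      exact absurd h1 h2.asymm

/-- Summing over all sequences of length `n` a function of the coordinates selected by `ι`: the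
remaining `n - m` coordinates are free. -/
lemma sum_comp_injective {X : Type*} [Fintype X] {n m : ℕ} (ι : Fin m → Fin n)
    (hι : Function.Injective ι) (g : (Fin m → X) → ℝ) :
    ∑ φ : Fin n → X, g (φ ∘ ι) = (Fintype.card X : ℝ) ^ (n - m) * ∑ ψ, g ψ := by
  classical
  have hcard : Fintype.card {i // ¬ i ∈ Set.range ι} = n - m := by
    rw [Fintype.card_subtype_compl, Fintype.card_fin, ← Fintype.card_congr (Equiv.ofInjective ι hι),
      Fintype.card_fin]
  let e := Equiv.piEquivPiSubtypeProd (· ∈ Set.range ι) (fun _ : Fin n => X)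
  let e' : (Set.range ι → X) ≃ (Fin m → X) :=
    (Equiv.ofInjective ι hι).symm.arrowCongr (Equiv.refl X)
  calc ∑ φ : Fin n → X, g (φ ∘ ι) = ∑ φ : Fin n → X, g (e' (e φ).1) := rfl
    _ = ∑ x : ({i // i ∈ Set.range ι} → X) × ({i // ¬ i ∈ Set.range ι} → X), g (e' x.1) :=
        e.sum_comp fun x => g (e' x.1)
    _ = (Fintype.card X : ℝ) ^ (n - m) * ∑ y : Set.range ι → X, g (e' y) := by
        rw [Fintype.sum_prod_type, Finset.mul_sum]
        refine Finset.sum_congr rfl fun y _ => ?_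
        simp only [Finset.sum_const, Finset.card_univ, Fintype.card_fun, hcard, nsmul_eq_mul,
          Nat.cast_pow]
    _ = _ := by rw [e'.sum_comp g]

/-- The first moment method: if sequences of `m` vertices of a triangle-free graph `Γ` are
typically of small weight, then some sequence of `n` vertices of `Γ` induces a graph all of
whose `m`-subsets contain a copy of `F`. -/
lemma minFIndep_le_of_weight {V X : Type*} [Fintype X] [Nonempty X] (F : SimpleGraph V)
    (Γ : SimpleGraph X) (hΓ : ∀ u v w, Γ.Adj u v → Γ.Adj v w → Γ.Adj u w → False) {r Q : ℝ}
    (hr0 : 0 ≤ r) (hr1 : r ≤ 1) (n m : ℕ)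
    (hQ : ∑ φ : Fin m → X, seqWeight Γ r φ ≤ Q * (Fintype.card X : ℝ) ^ m)
    (hlt : (n.choose m : ℝ) * Q < r ^ turanNum m F) :
    minFIndep F (⊤ : SimpleGraph (Fin 3)) n ≤ m := by
  classical
  set N : ℝ := (Fintype.card X : ℝ) with hN
  have hNpos : 0 < N := by rw [hN]; exact_mod_cast Fintype.card_pos
  obtain ⟨φ, hφ⟩ : ∃ φ : Fin n → X, ∀ S : Finset (Fin n), S.card = m →
      ContainsCopy F ((Γ.comap φ).induce (S : Set (Fin n))) := by
    by_contra hcon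
    push Not at hcon
    have hmn : m ≤ n := by
      obtain ⟨S, hS, -⟩ := hcon fun _ => Classical.arbitrary X
      simpa [hS] using S.card_le_univ
    let P := ↥(Finset.powersetCard m (Finset.univ : Finset (Fin n)))
    have hPc : ∀ S : P, S.1.card = m := fun S => (Finset.mem_powersetCard.1 S.2).2
    let ι : P → Fin m → Fin n := fun S => S.1.orderEmbOfFin (hPc S)
    have hlow : ∀ φ : Fin n → X, r ^ turanNum m F ≤ ∑ S : P, seqWeight Γ r (φ ∘ ι S) := by
      intro φ
      obtain ⟨S, hS, hfree⟩ := hcon φ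
      let S' : P := ⟨S, Finset.mem_powersetCard.2 ⟨Finset.subset_univ _, hS⟩⟩
      have hfree' : ¬ ContainsCopy F (Γ.comap (φ ∘ ι S')) := by
        rintro ⟨f, hf, hadj⟩
        refine hfree ⟨fun a => ⟨ι S' (f a), S.orderEmbOfFin_mem hS (f a)⟩, ?_, ?_⟩
        · intro a b hab
          exact hf ((S.orderEmbOfFin hS).injective (congrArg Subtype.val hab))
        · intro a b hab
          exact hadj hab
      calc r ^ turanNum m F ≤ r ^ Nat.card (Γ.comap (φ ∘ ι S')).edgeSet :=
            pow_le_pow_of_le_one hr0 hr1 (card_edgeSet_le_turanNum F _ hfree')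
        _ ≤ seqWeight Γ r (φ ∘ ι S') := pow_card_edgeSet_le_seqWeight Γ hr0 hr1 _
        _ ≤ ∑ S : P, seqWeight Γ r (φ ∘ ι S) := by
            refine Finset.single_le_sum (f := fun S : P => seqWeight Γ r (φ ∘ ι S))
              (fun S _ => ?_) (Finset.mem_univ S')
            exact (pow_nonneg hr0 _).trans (pow_card_edgeSet_le_seqWeight Γ hr0 hr1 _)
    have hcount : r ^ turanNum m F * N ^ n ≤ n.choose m * Q * N ^ n := by
      calc r ^ turanNum m F * N ^ n = ∑ _φ : Fin n → X, r ^ turanNum m F := by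
            simp [hN, mul_comm]
        _ ≤ ∑ φ : Fin n → X, ∑ S : P, seqWeight Γ r (φ ∘ ι S) :=
            Finset.sum_le_sum fun φ _ => hlow φ
        _ = ∑ S : P, N ^ (n - m) * ∑ ψ : Fin m → X, seqWeight Γ r ψ := by
            rw [Finset.sum_comm]
            exact Finset.sum_congr rfl fun S _ =>
              sum_comp_injective (ι S) (S.1.orderEmbOfFin (hPc S)).injective _
        _ = n.choose m * (N ^ (n - m) * ∑ ψ : Fin m → X, seqWeight Γ r ψ) := by
            rw [Finset.sum_const, Finset.card_univ, Fintype.card_coe,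
              Finset.card_powersetCard, Finset.card_univ, Fintype.card_fin, nsmul_eq_mul]
        _ ≤ n.choose m * (N ^ (n - m) * (Q * N ^ m)) := by gcongr
        _ = n.choose m * Q * (N ^ (n - m) * N ^ m) := by ring
        _ = n.choose m * Q * N ^ n := by rw [← pow_add, Nat.sub_add_cancel hmn]
    exact absurd (le_of_mul_le_mul_right hcount (by positivity)) (not_le.2 hlt)
  have hfree : ¬ ContainsCopy (⊤ : SimpleGraph (Fin 3)) (Γ.comap φ) := by
    rintro ⟨f, -, hf⟩
    exact hΓ _ _ _ (hf (show (⊤ : SimpleGraph (Fin 3)).Adj 0 1 by simp))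
      (hf (show (⊤ : SimpleGraph (Fin 3)).Adj 1 2 by simp))
      (hf (show (⊤ : SimpleGraph (Fin 3)).Adj 0 2 by simp))
  have hmin : minFIndep F (⊤ : SimpleGraph (Fin 3)) n ≤ fIndepNum F (Γ.comap φ) :=
    Nat.sInf_le ⟨_, hfree, rfl⟩
  refine hmin.trans (csSup_le' ?_)
  rintro k ⟨S, rfl, hS⟩
  by_contra hk
  obtain ⟨T, hTS, hT⟩ := Finset.exists_subset_card_eq (not_le.1 hk).le
  obtain ⟨f, hf, hadj⟩ := hφ T hT
  refine hS ⟨fun a => ⟨(f a).1, hTS (f a).2⟩, ?_, fun a b hab => hadj hab⟩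
  intro a b hab
  exact hf (Subtype.ext (congrArg (fun x => x.1) hab))

end UnionBound

/-! ### Choice of parameters -/

section Parameters

/-- The union bound over `m`-subsets succeeds as soon as `m` is at least about `n / p` and
`m ^ (1 - a)` is at least about `p * log p ^ 2`. -/
lemma minFIndep_le_of_params {V : Type*} (F : SimpleGraph V) {a c₀ : ℝ} (ha0 : 0 ≤ a)
    (hc₀ : 0 < c₀) (n m p : ℕ) (hp : p.Prime) (hm : 1 ≤ m) (hn : 1 ≤ n)
    (hE : (turanNum m F : ℝ) ≤ c₀ * (m : ℝ) ^ (1 + a))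
    (h1 : 32 * (c₀ + 1) * p * Real.log p ^ 2 * (m : ℝ) ^ a ≤ m)
    (h2 : 200 * (n : ℝ) ≤ m * p) :
    minFIndep F (⊤ : SimpleGraph (Fin 3)) n ≤ m := by
  have : Fact p.Prime := ⟨hp⟩
  have hp2 : (2 : ℝ) ≤ p := by exact_mod_cast hp.two_le
  have hp0 : (0 : ℝ) < p := by linarith
  have hm1 : (1 : ℝ) ≤ m := by exact_mod_cast hm
  have hm0 : (0 : ℝ) < m := by linarith
  have hn0 : (0 : ℝ) < n := by exact_mod_cast hn
  have hma : 1 ≤ (m : ℝ) ^ a := Real.one_le_rpow hm1 ha0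
  -- the penalty is chosen so that `turanNum m F` edges cost a factor of at most `exp m`
  set y := (c₀ + 1) * (m : ℝ) ^ a with hy
  have hy1 : 1 ≤ y := by nlinarith
  have hy0 : 0 < y := by linarith
  set r := Real.exp (-(1 / y)) with hr
  have hr0 : 0 ≤ r := (Real.exp_pos _).le
  have hr1 : r ≤ 1 := by
    rw [hr, Real.exp_le_one_iff, neg_nonpos]
    positivity
  have hinv : 1 / y ≤ 1 := by rw [div_le_one hy0]; exact hy1
  have h1r : 1 / (2 * y) ≤ 1 - r := by
    have hpos : 0 < 1 + 1 / y := by positivity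
    have e1 : 1 + 1 / y ≤ Real.exp (1 / y) := by linarith [Real.add_one_le_exp (1 / y)]
    have e2 : r ≤ 1 / (1 + 1 / y) := by
      rw [hr, Real.exp_neg, inv_eq_one_div]
      exact one_div_le_one_div_of_le hpos e1
    have e3 : 1 - 1 / (1 + 1 / y) = 1 / (y + 1) := by field_simp; ring
    have e4 : 1 / (2 * y) ≤ 1 / (y + 1) := one_div_le_one_div_of_le (by linarith) (by linarith)
    linarith
  set κ : ℝ := 1 / (16 * (p : ℝ)) with hκ
  have hκ0 : 0 ≤ κ := by positivity
  have hκ1 : κ ≤ 1 := by rw [hκ, div_le_one (by positivity)]; linarith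
  have hlog : 1 / 2 ≤ Real.log p := by
    have := Real.log_le_log (by norm_num) hp2
    linarith [Real.log_two_gt_d9]
  -- the exponent for which `(1 - (1 - r) * κ) ^ s` drops to `1 / p`
  set s := 32 * p * y * Real.log p with hs
  have hs1 : 1 ≤ s := by
    have e1 : 2 ≤ p * y := by nlinarith
    have e2 : s = 32 * (p * y) * Real.log p := by rw [hs]; ring
    nlinarith
  have hs0 : 0 ≤ s := by linarith
  have hδ : 1 / (32 * p * y) ≤ (1 - r) * κ := by
    have := mul_le_mul_of_nonneg_right h1r hκ0
    have e : 1 / (2 * y) * κ = 1 / (32 * p * y) := by rw [hκ]; field_simp; norm_num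
    linarith
  have hδ1 : (1 - r) * κ ≤ 1 := by nlinarith
  have hsτ : (1 - (1 - r) * κ) ^ s ≤ 4 / (p : ℝ) := by
    calc (1 - (1 - r) * κ) ^ s ≤ (Real.exp (-(1 / (32 * p * y)))) ^ s := by
          apply Real.rpow_le_rpow (by linarith) _ hs0
          have := Real.add_one_le_exp (-(1 / (32 * p * y)))
          linarith
      _ = Real.exp (-Real.log p) := by
          rw [← Real.exp_mul]
          congr 1
          rw [hs]
          field_simp
      _ = 1 / p := by rw [Real.exp_neg, Real.exp_log hp0, one_div]
      _ ≤ 4 / p := by gcongr; norm_num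
  have hsum := sum_seqWeight_le (pbGraph p) hr0 hr1 (by positivity : (0 : ℝ) < 4 / p) hκ0 hκ1 hs1
    hsτ (fun f h hf0 hf1 hh0 hh1 hf hh => pbGraph_mixing p f h hf0 hf1 hh0 hh1 hf hh) m
    (fun _ => 1) (fun _ => zero_le_one) fun _ => le_rfl
  simp only [Finset.prod_const_one, one_mul, Finset.sum_const, Finset.card_univ, nsmul_eq_mul,
    mul_one] at hsum
  set N : ℝ := (Fintype.card (PointBits p) : ℝ) with hN
  have hNpos : 0 < N := by rw [hN]; exact_mod_cast Fintype.card_pos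
  have hmax : max 1 (N / (4 / (p : ℝ) * N)) ^ s ≤ Real.exp m := by
    have e1 : N / (4 / (p : ℝ) * N) = p / 4 := by field_simp
    rw [e1]
    calc max 1 ((p : ℝ) / 4) ^ s ≤ (p : ℝ) ^ s := by
          apply Real.rpow_le_rpow (by positivity) _ hs0
          exact max_le (by linarith) (by linarith)
      _ = Real.exp (Real.log p * s) := Real.rpow_def_of_pos hp0 s
      _ ≤ Real.exp m := by
          apply Real.exp_le_exp.2
          calc Real.log p * s = 32 * (c₀ + 1) * p * Real.log p ^ 2 * (m : ℝ) ^ a := by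
                rw [hs, hy]; ring
            _ ≤ m := h1
  refine minFIndep_le_of_weight F (pbGraph p) (fun u v w => pbGraph_triangle_free p) hr0 hr1 n m
    (Q := (8 / p) ^ m * Real.exp m) ?_ ?_
  · calc _ ≤ _ := hsum
      _ ≤ (2 * (4 / (p : ℝ)) * N) ^ m * Real.exp m := by gcongr
      _ = _ := by rw [mul_pow]; ring
  · have hexp : Real.exp m = Real.exp 1 ^ m := by rw [← Real.exp_nat_mul, mul_one]
    have hchoose : (n.choose m : ℝ) ≤ (n / m) ^ m * Real.exp m := by
      calc (n.choose m : ℝ) ≤ (n : ℝ) ^ m / m.factorial := Nat.choose_le_pow_div m n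
        _ = (n / m) ^ m * ((m : ℝ) ^ m / m.factorial) := by
            rw [div_pow]; field_simp
        _ ≤ (n / m) ^ m * Real.exp m := by
            gcongr
            exact Real.pow_div_factorial_le_exp m hm0.le m
    have hrE : Real.exp (-(m : ℝ)) ≤ r ^ turanNum m F := by
      rw [hr, ← Real.exp_nat_mul]
      apply Real.exp_le_exp.2
      have e1 : (turanNum m F : ℝ) ≤ y * m := by
        calc (turanNum m F : ℝ) ≤ c₀ * (m : ℝ) ^ (1 + a) := hE
          _ = c₀ * ((m : ℝ) ^ a * m) := by rw [Real.rpow_add hm0, Real.rpow_one]; ring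
          _ ≤ (c₀ + 1) * ((m : ℝ) ^ a * m) := by gcongr; linarith
          _ = y * m := by rw [hy]; ring
      have e2 : (turanNum m F : ℝ) / y ≤ m := by rw [div_le_iff₀ hy0]; linarith
      rw [mul_neg, mul_one_div]
      linarith
    refine lt_of_lt_of_le ?_ hrE
    have he3 : Real.exp 1 ^ 3 < 25 := by
      have := Real.exp_one_lt_d9
      calc Real.exp 1 ^ 3 < 2.7182818286 ^ 3 := by gcongr
        _ < 25 := by norm_num
    have hbase : Real.exp 1 ^ 3 * (8 * n / (m * p)) < 1 := by
      have e1 : 8 * (n : ℝ) / (m * p) ≤ 1 / 25 := by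
        rw [div_le_div_iff₀ (by positivity) (by norm_num)]; linarith
      have e2 : 0 < 8 * (n : ℝ) / (m * p) := by positivity
      nlinarith
    have hpow : (Real.exp 1 ^ 3 * (8 * n / (m * p))) ^ m < 1 :=
      pow_lt_one₀ (by positivity) hbase (by omega)
    calc (n.choose m : ℝ) * ((8 / p) ^ m * Real.exp m)
        ≤ ((n / m) ^ m * Real.exp m) * ((8 / p) ^ m * Real.exp m) := by gcongr
      _ = (Real.exp 1 ^ 3 * (8 * n / (m * p))) ^ m * Real.exp (-(m : ℝ)) := by
          rw [Real.exp_neg, hexp]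
          have e : Real.exp 1 ^ 3 * (8 * n / (m * p)) =
            (n / m) * (8 / p) * Real.exp 1 ^ 3 := by field_simp
          rw [e, mul_pow, mul_pow, ← pow_mul, mul_comm 3 m, pow_mul]
          have : Real.exp 1 ^ m ≠ 0 := by positivity
          field_simp
      _ < 1 * Real.exp (-(m : ℝ)) := by
          gcongr
      _ = _ := one_mul _

end Parameters

theorem stmt0 {V : Type*} [Fintype V] (a : ℝ) (ha0 : 0 ≤ a) (ha1 : a < 1 / 2)
    (F : SimpleGraph V) (c₀ : ℝ) (hc₀ : 0 < c₀)
    (hF : ∀ b : ℕ, 0 < b → (turanNum b F : ℝ) ≤ c₀ * (b : ℝ) ^ (1 + a)) :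
    ∃ (C : ℝ) (N : ℕ), 0 < C ∧ ∀ n : ℕ, n > N →
      (minFIndep F (⊤ : SimpleGraph (Fin 3)) n : ℝ) ≤
        C * (n : ℝ) ^ ((1 : ℝ) / (2 - a)) * Real.log n ^ ((3 : ℝ) / (2 - a)) := by
  -- the second bound makes `M ≤ n` below, which uses `a < 1 / 2`
  have hev : ∀ᶠ n : ℕ in Filter.atTop, 64 * (c₀ + 1) ≤ Real.log n ∧
      Real.log n ^ (3 : ℝ) ≤ (n : ℝ) ^ (1 / 2 : ℝ) := by
    have h1 : ∀ᶠ x : ℝ in Filter.atTop, 64 * (c₀ + 1) ≤ Real.log x :=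
      Real.tendsto_log_atTop.eventually_ge_atTop _
    have h2 := (isLittleO_log_rpow_rpow_atTop 3 (by norm_num : (0 : ℝ) < 1 / 2)).bound
      (by norm_num : (0 : ℝ) < 1)
    have h3 : ∀ᶠ x : ℝ in Filter.atTop, 64 * (c₀ + 1) ≤ Real.log x ∧
        Real.log x ^ (3 : ℝ) ≤ x ^ (1 / 2 : ℝ) := by
      filter_upwards [h1, h2, Filter.eventually_ge_atTop 0] with x hx1 hx2 hx3
      refine ⟨hx1, ?_⟩
      rw [one_mul, Real.norm_of_nonneg (Real.rpow_nonneg hx3 _)] at hx2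
      exact (le_abs_self _).trans hx2
    exact tendsto_natCast_atTop_atTop.eventually h3
  obtain ⟨N, hN⟩ := Filter.eventually_atTop.1 hev
  refine ⟨201, N, by norm_num, fun n hn => ?_⟩
  obtain ⟨hL, hL3⟩ := hN n hn.le
  set L := Real.log n with hLdef
  have hL64 : 64 ≤ L := by linarith
  have hL0 : 0 < L := by linarith
  have hn0' : 0 < n := by
    rcases Nat.eq_zero_or_pos n with h | h
    · rw [hLdef, h] at hL64
      norm_num at hL64
    · exact h
  have hn0 : (0 : ℝ) < n := by exact_mod_cast hn0'
  have hn64 : (64 : ℝ) ≤ n := by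
    have := Real.log_le_sub_one_of_pos hn0
    linarith
  have h2a : 0 < 2 - a := by linarith
  -- `M` is the target size up to a constant, i.e. the solution of `M ^ (2 - a) = n * L ^ 3`
  set M : ℝ := (n : ℝ) ^ ((1 : ℝ) / (2 - a)) * L ^ ((3 : ℝ) / (2 - a)) with hM
  have hM0 : 0 < M := by positivity
  have hMpow : M ^ (2 - a) = n * L ^ 3 := by
    rw [hM, Real.mul_rpow (by positivity) (by positivity), ← Real.rpow_mul hn0.le,
      ← Real.rpow_mul hL0.le, div_mul_cancel₀ _ h2a.ne', div_mul_cancel₀ _ h2a.ne',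
      Real.rpow_one]
    norm_cast
  have hM2 : 2 ≤ M := by
    by_contra hcon
    push Not at hcon
    have e1 : M ^ (2 - a) ≤ 2 ^ (2 - a) := Real.rpow_le_rpow hM0.le hcon.le h2a.le
    have e2 : (2 : ℝ) ^ (2 - a) ≤ 2 ^ (2 : ℝ) :=
      Real.rpow_le_rpow_of_exponent_le (by norm_num) (by linarith)
    rw [hMpow] at e1
    norm_num at e2
    have e3 : (1 : ℝ) ≤ L ^ 3 := one_le_pow₀ (by linarith)
    nlinarith
  have hMn : M ≤ n := by
    by_contra hcon
    push Not at hcon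
    have e1 : (n : ℝ) ^ (2 - a) < M ^ (2 - a) := Real.rpow_lt_rpow hn0.le hcon h2a
    have e2 : (n : ℝ) ^ (1 + 1 / 2 : ℝ) ≤ (n : ℝ) ^ (2 - a) :=
      Real.rpow_le_rpow_of_exponent_le (by linarith) (by linarith)
    have e3 : L ^ 3 ≤ (n : ℝ) ^ (1 / 2 : ℝ) := by exact_mod_cast hL3
    rw [hMpow] at e1
    rw [Real.rpow_add hn0, Real.rpow_one] at e2
    have e4 := mul_le_mul_of_nonneg_left e3 hn0.le
    linarith
  -- a prime `p` with `n / M ≤ p ≤ 2 * n / M`, by Bertrand's postulate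
  set x := (n : ℝ) / M with hx
  have hx1 : 1 ≤ x := (one_le_div hM0).2 hMn
  obtain ⟨p, hp, hp1, hp2⟩ := Nat.exists_prime_lt_and_le_two_mul ⌊x⌋₊
    (Nat.floor_pos.2 hx1).ne'
  have hxp : x ≤ p := (Nat.lt_floor_add_one x).le.trans (by exact_mod_cast hp1)
  have hpx : (p : ℝ) ≤ 2 * x := by
    have e1 : (p : ℝ) ≤ 2 * (⌊x⌋₊ : ℝ) := by exact_mod_cast hp2
    linarith [Nat.floor_le (by linarith : 0 ≤ x)]
  have hp0 : (0 : ℝ) < p := by linarith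
  have hxM : x * M = n := by rw [hx]; field_simp
  have hlogp : Real.log p ≤ L := by
    apply Real.log_le_log hp0
    nlinarith
  have hlogp0 : 0 ≤ Real.log p := Real.log_natCast_nonneg p
  set m := ⌈200 * M⌉₊ with hm
  have hm1 : 200 * M ≤ m := Nat.le_ceil _
  have hm2 : (m : ℝ) ≤ 201 * M := by
    have := Nat.ceil_lt_add_one (by positivity : 0 ≤ 200 * M)
    linarith
  have hm0 : (0 : ℝ) < m := by linarith
  have hm0' : 0 < m := by exact_mod_cast hm0
  have hmain : minFIndep F (⊤ : SimpleGraph (Fin 3)) n ≤ m := by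
    refine minFIndep_le_of_params F ha0 hc₀ n m p hp hm0' hn0' (hF m hm0') ?_ ?_
    · have e1 : M ^ (1 - a) ≤ (m : ℝ) ^ (1 - a) :=
        Real.rpow_le_rpow hM0.le (by linarith) (by linarith)
      have e2 : M ^ (2 - a) = M ^ (1 - a) * M := by
        rw [show 2 - a = (1 - a) + 1 by ring, Real.rpow_add hM0, Real.rpow_one]
      have e3 : x * L ^ 3 = M ^ (1 - a) := by
        have : x * L ^ 3 * M = M ^ (1 - a) * M := by
          rw [← e2, hMpow, ← hxM]; ring
        exact mul_right_cancel₀ hM0.ne' this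
      have e4 : 32 * (c₀ + 1) * p * Real.log p ^ 2 ≤ M ^ (1 - a) := by
        calc 32 * (c₀ + 1) * p * Real.log p ^ 2 ≤ 32 * (c₀ + 1) * (2 * x) * L ^ 2 := by gcongr
          _ = (64 * (c₀ + 1)) * (x * L ^ 2) := by ring
          _ ≤ L * (x * L ^ 2) := by gcongr
          _ = M ^ (1 - a) := by rw [← e3]; ring
      calc 32 * (c₀ + 1) * p * Real.log p ^ 2 * (m : ℝ) ^ a
          ≤ (m : ℝ) ^ (1 - a) * (m : ℝ) ^ a := by
            gcongr
            exact e4.trans e1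
        _ = m := by rw [← Real.rpow_add hm0, sub_add_cancel, Real.rpow_one]
    · calc 200 * (n : ℝ) = 200 * M * x := by rw [← hxM]; ring
        _ ≤ m * p := by gcongr
  calc (minFIndep F (⊤ : SimpleGraph (Fin 3)) n : ℝ) ≤ m := by exact_mod_cast hmain
    _ ≤ 201 * M := hm2
    _ = _ := by rw [hM]; ring
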